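/- arXiv:math-ph/0604031 — 3 statements merged into one kernel-verified Lean document; each statement's English description precedes it below -/
import Mathlib

section
/- Let z₀ ∈ ℂ, R > 0, and let f be holomorphic on an open set containing the closed disc {z : |z − z₀| ≤ R}. Let x, y lie in the open disc {z : |z − z₀| < R} with x ≠ y. Then (1/(2πi)) ∮_{|z−z₀|=R} f(z) / ((z − x)(z − y)²) dz = (f(x) − f(y))/(x − y)² + f'(y)/(y − x). (This evaluates the contour-integral expression M_{xyy} for the confluent second divided difference of f.) -/
open Complex

/-!
For a circle integrable `g`, the Cauchy transform `C g w = (2πi)⁻¹ ∮ (z - w)⁻¹ g(z) dz` is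
continuous on the open disc, and the resolvent identity
`(z - w)⁻¹ - (z - y)⁻¹ = (w - y) (z - w)⁻¹ (z - y)⁻¹` shows that its slope from `y` to `w ≠ y` is
the Cauchy transform at `w` of `(z - y)⁻¹ g(z)`. Letting `w → y` identifies the derivative of `C g`
at `y` as well, so multiplying the density by `(z - y)⁻¹` always amounts to applying `dslope · y` to
the transform. Since `C f = f` on the disc by Cauchy's formula, two such multiplications yield the
second divided difference of `f` with nodes `x, y, y`.
-/

open Set Metric Topology

section DSlope

variable {𝕜 E : Type*} [NontriviallyNormedField 𝕜] [NormedAddCommGroup E] [NormedSpace 𝕜 E]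

theorem eqOn_dslope {f g : 𝕜 → E} {s : Set 𝕜} {a : 𝕜} (hfg : EqOn f g s)
    (hs : s ∈ 𝓝 a) : EqOn (dslope f a) (dslope g a) s := by
  intro b hb
  rcases eq_or_ne b a with rfl | hba
  · simpa only [dslope_same] using (hfg.eventuallyEq_of_mem hs).deriv_eq
  · simp only [dslope_of_ne _ hba, slope_def_module, hfg (mem_of_mem_nhds hs), hfg hb]

theorem dslope_dslope_of_ne (f : 𝕜 → E) {x y : 𝕜} (hxy : x ≠ y) :
    dslope (dslope f y) y x = ((x - y) ^ 2)⁻¹ • (f x - f y) + (y - x)⁻¹ • deriv f y := by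
  rw [dslope_of_ne _ hxy, slope_def_module, dslope_same, dslope_of_ne _ hxy, slope_def_module,
    smul_sub, smul_smul, ← mul_inv, ← pow_two, ← neg_sub x y, inv_neg, neg_smul, sub_eq_add_neg]

end DSlope

section CauchyTransform

variable {E : Type*} [NormedAddCommGroup E] [NormedSpace ℂ E]
  {c w y : ℂ} {R : ℝ} {f F g : ℂ → E}

/-- The Cauchy transform of a density `g` on the circle of radius `R` centred at `c`, normalised
by `(2πi)⁻¹` so that it reproduces holomorphic functions inside the circle. -/
noncomputable def cauchyTransform (c : ℂ) (R : ℝ) (g : ℂ → E) (w : ℂ) : E :=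
  (2 * Real.pi * I : ℂ)⁻¹ • ∮ z in C(c, R), (z - w)⁻¹ • g z

theorem sub_ne_zero_of_mem_sphere {z : ℂ} (hz : z ∈ sphere c R) (hy : y ∉ sphere c R) :
    z - y ≠ 0 :=
  sub_ne_zero.2 (ne_of_mem_of_not_mem hz hy)

theorem circleIntegrable_sub_inv_smul (hg : CircleIntegrable g c R) (hR : 0 ≤ R)
    (hy : y ∉ sphere c R) : CircleIntegrable (fun z ↦ (z - y)⁻¹ • g z) c R := by
  refine hg.fun_continuousOn_smul ?_
  rw [abs_of_nonneg hR]
  exact (continuousOn_id.sub continuousOn_const).inv₀ fun _ hz ↦ sub_ne_zero_of_mem_sphere hz hy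

theorem continuousOn_cauchyTransform [CompleteSpace E] (hg : CircleIntegrable g c R) :
    ContinuousOn (cauchyTransform c R g) (ball c R) := by
  rcases le_or_gt R 0 with hR | hR
  · simp only [ball_eq_empty.2 hR, continuousOn_empty]
  · lift R to NNReal using hR.le
    rw [← eball_coe]
    exact (hasFPowerSeriesOn_cauchy_integral hg (mod_cast hR)).continuousOn

theorem slope_cauchyTransform (hg : CircleIntegrable g c R) (hR : 0 ≤ R) (hy : y ∉ sphere c R)
    (hw : w ∉ sphere c R) (hwy : w ≠ y) :
    slope (cauchyTransform c R g) y w = cauchyTransform c R (fun z ↦ (z - y)⁻¹ • g z) w := by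
  have resolvent_identity : EqOn (fun z ↦ (z - w)⁻¹ • (z - y)⁻¹ • g z)
      (fun z ↦ (w - y)⁻¹ • ((z - w)⁻¹ • g z - (z - y)⁻¹ • g z)) (sphere c R) := by
    intro z hz
    have hzw : z - w ≠ 0 := sub_ne_zero_of_mem_sphere hz hw
    have hzy : z - y ≠ 0 := sub_ne_zero_of_mem_sphere hz hy
    have hwy' : w - y ≠ 0 := sub_ne_zero.2 hwy
    simp only [← sub_smul, smul_smul]
    congr 1
    field_simp
    ring
  simp only [cauchyTransform, slope_def_module]
  rw [circleIntegral.integral_congr hR resolvent_identity, circleIntegral.integral_smul,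
    circleIntegral.integral_sub (circleIntegrable_sub_inv_smul hg hR hw)
      (circleIntegrable_sub_inv_smul hg hR hy), ← smul_sub, smul_comm]

theorem hasDerivAt_cauchyTransform [CompleteSpace E] (hg : CircleIntegrable g c R)
    (hy : y ∈ ball c R) :
    HasDerivAt (cauchyTransform c R g) (cauchyTransform c R (fun z ↦ (z - y)⁻¹ • g z) y) y := by
  have hball : ball c R ∈ 𝓝 y := isOpen_ball.mem_nhds hy
  have hsphere {w : ℂ} (hw : w ∈ ball c R) : w ∉ sphere c R :=
    sphere_disjoint_ball.notMem_of_mem_right hw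
  have hR : 0 ≤ R := (pos_of_mem_ball hy).le
  have hg_y : CircleIntegrable (fun z ↦ (z - y)⁻¹ • g z) c R :=
    circleIntegrable_sub_inv_smul hg hR (hsphere hy)
  have hcont : ContinuousAt (cauchyTransform c R fun z ↦ (z - y)⁻¹ • g z) y :=
    (continuousOn_cauchyTransform hg_y).continuousAt hball
  refine hasDerivAt_iff_tendsto_slope.2 ((hcont.tendsto.mono_left nhdsWithin_le_nhds).congr' ?_)
  filter_upwards [self_mem_nhdsWithin, mem_nhdsWithin_of_mem_nhds hball] with w hwy hw
  exact (slope_cauchyTransform hg hR (hsphere hy) (hsphere hw) hwy).symm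

theorem eqOn_dslope_cauchyTransform [CompleteSpace E] (hg : CircleIntegrable g c R)
    (hy : y ∈ ball c R) :
    EqOn (dslope (cauchyTransform c R g) y) (cauchyTransform c R fun z ↦ (z - y)⁻¹ • g z)
      (ball c R) := by
  intro w hw
  rcases eq_or_ne w y with rfl | hwy
  · rw [dslope_same, (hasDerivAt_cauchyTransform hg hy).deriv]
  · rw [dslope_of_ne _ hwy, slope_cauchyTransform hg (pos_of_mem_ball hy).le
      (sphere_disjoint_ball.notMem_of_mem_right hy)
      (sphere_disjoint_ball.notMem_of_mem_right hw) hwy]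

theorem eqOn_cauchyTransform_sub_inv_smul_dslope [CompleteSpace E] (hg : CircleIntegrable g c R)
    (hy : y ∈ ball c R) (hF : EqOn (cauchyTransform c R g) F (ball c R)) :
    EqOn (cauchyTransform c R fun z ↦ (z - y)⁻¹ • g z) (dslope F y) (ball c R) :=
  (eqOn_dslope_cauchyTransform hg hy).symm.trans (eqOn_dslope hF (isOpen_ball.mem_nhds hy))

theorem eqOn_cauchyTransform_of_diffContOnCl [CompleteSpace E] (hf : DiffContOnCl ℂ f (ball c R)) :
    EqOn (cauchyTransform c R f) f (ball c R) :=
  fun _ hw ↦ hf.two_pi_i_inv_smul_circleIntegral_sub_inv_smul hw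

theorem stmt_7_general [CompleteSpace E] (hf : DiffContOnCl ℂ f (ball c R))
    {x : ℂ} (hx : x ∈ ball c R) (hy : y ∈ ball c R) :
    (2 * Real.pi * I : ℂ)⁻¹ • (∮ z in C(c, R), ((z - x) * (z - y) ^ 2)⁻¹ • f z) =
      dslope (dslope f y) y x := by
  have hR : 0 ≤ R := (pos_of_mem_ball hy).le
  have hf_int : CircleIntegrable f c R :=
    (hf.continuousOn_ball.mono sphere_subset_closedBall).circleIntegrable hR
  have hf_int' : CircleIntegrable (fun z ↦ (z - y)⁻¹ • f z) c R :=
    circleIntegrable_sub_inv_smul hf_int hR (sphere_disjoint_ball.notMem_of_mem_right hy)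
  have first_order :
      EqOn (cauchyTransform c R fun z ↦ (z - y)⁻¹ • f z) (dslope f y) (ball c R) :=
    eqOn_cauchyTransform_sub_inv_smul_dslope hf_int hy (eqOn_cauchyTransform_of_diffContOnCl hf)
  have second_order :
      EqOn (cauchyTransform c R fun z ↦ (z - y)⁻¹ • (z - y)⁻¹ • f z) (dslope (dslope f y) y)
        (ball c R) :=
    eqOn_cauchyTransform_sub_inv_smul_dslope hf_int' hy first_order
  simpa only [cauchyTransform, smul_smul, mul_inv, pow_two, mul_assoc] using second_order hx

end CauchyTransform

/-- The Riesz–Dunford contour integral for the confluent second divided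
difference M_{xyy}: (1/(2πi)) ∮ f(z)/((z−x)(z−y)²) dz = (f(x)−f(y))/(x−y)² + f'(y)/(y−x). -/
theorem stmt_7 (z₀ : ℂ) (R : ℝ) (hR : 0 < R) (f : ℂ → ℂ) (U : Set ℂ) (hU : IsOpen U)
    (hsub : Metric.closedBall z₀ R ⊆ U) (hf : DifferentiableOn ℂ f U)
    (x y : ℂ) (hx : x ∈ Metric.ball z₀ R) (hy : y ∈ Metric.ball z₀ R) (hxy : x ≠ y) :
    (2 * (Real.pi : ℂ) * Complex.I)⁻¹ *
        (∮ z in C(z₀, R), f z / ((z - x) * (z - y) ^ 2))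
      = (f x - f y) / (x - y) ^ 2 + deriv f y / (y - x) := by
  simpa only [smul_eq_mul, div_eq_inv_mul, dslope_dslope_of_ne f hxy] using
    stmt_7_general (hf.diffContOnCl_ball hsub) hx hy
end

section
/- Let n ≥ 1 and λ = (λ_1,…,λ_n) ∈ P_n, and let f(x) = 2√x, so that M_{kk} = f'(λ_k) = λ_k^{−1/2}, M_{kkk} = f''(λ_k)/2 = −λ_k^{−3/2}/4, c² = Σ_k 1/f'(λ_k)² = 1, and ρ_{ij} = 1/2 for all i < j (where ρ_{ij} = −(f'(λ_i) − f'(λ_j))/(f'(λ_i) f'(λ_j)(f(λ_i) − f(λ_j))) if λ_i ≠ λ_j and ρ_{ij} = −f''(λ_i)/f'(λ_i)³ if λ_i = λ_j). Then the real scalar-curvature expression Σ_{i≠k} 4 (M_{iii} M_{kkk}/(M_{ii}³ M_{kk}³))(1 − 1/M_{ii}² − 1/M_{kk}²) − 4 ( Σ_{k=1}^{n} (M_{kkk}/M_{kk}³)(1 − 1/M_{kk}²) )( Σ_{1≤i<j≤n} ρ_{ij} ) + ( Σ_{1≤i<j≤n} ρ_{ij} )² − Σ_{1≤i<j≤n}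 ρ_{ij}² equals d(d−1)/4 with d = (n−1)(n+2)/2. (The Wigner–Yanase metric maps the real state space onto a piece of the Euclidean sphere of radius 2 and dimension d = (n−1)(n+2)/2, whose scalar curvature is d(d−1)/4.) -/
open Finset

/-!
The diagonal values of `ρ` determine the ratios `M_{kkk} / M_{kk} ^ 3 = -ρ_{kk} / 2`, so once `ρ` is
a constant `r` and the weights `1 / M_{kk} ^ 2` sum to one, every sum in the scalar curvature
reduces to a count. With `N = n.choose 2` the total is
`r ^ 2 * ((n - 1) * (n - 2) + 2 * (n - 1) * N + N ^ 2 - N)`, which is `r ^ 2 * (d * (d - 1))`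
for `d = N + n - 1 = (n - 1) * (n + 2) / 2`. For `f = 2√x` the weights are the eigenvalues `λ_k`
themselves and `r = 1 / 2`.
-/

section PairSums

variable {ι : Type*} [Fintype ι]

theorem sum_sum_ite_ne_eq_sub {M : Type*} [AddCommGroup M] [DecidableEq ι] (g : ι → ι → M) :
    (∑ i, ∑ k, if i ≠ k then g i k else 0) = ∑ i, ∑ k, g i k - ∑ i, g i i := by
  have sum_ne (i : ι) : (∑ k, if i ≠ k then g i k else 0) = ∑ k, g i k - g i i := by
    rw [← sum_filter, filter_ne, sum_erase_eq_sub (mem_univ i)]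
  simp only [sum_ne, sum_sub_distrib]

theorem sum_sum_ite_ne_one_sub_sub {R : Type*} [CommRing R] [DecidableEq ι] (w : ι → R) :
    (∑ i, ∑ k, if i ≠ k then 1 - w i - w k else 0) =
      (Fintype.card ι - 1) * (Fintype.card ι - 2 * ∑ k, w k) := by
  simp only [sum_sum_ite_ne_eq_sub, sum_sub_distrib, sum_const, card_univ, nsmul_eq_mul, ← mul_sum]
  ring

theorem sum_sum_ite_lt_const {M : Type*} [AddCommMonoid M] [LinearOrder ι] (c : M) :
    (∑ i : ι, ∑ j : ι, if i < j then c else 0) = (Fintype.card ι).choose 2 • c := by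
  rw [← Fintype.sum_prod_type', ← sum_filter, sum_const, Fintype.card_product_filter_lt]

end PairSums

section ScalarCurvature

/-- The quantity `ρ_{ij}` of the metric generated by `f`, as a function of the eigenvalues
`x = λ_i` and `y = λ_j`. -/
noncomputable def curvatureRho (f : ℝ → ℝ) (x y : ℝ) : ℝ :=
  if x = y then -(deriv (deriv f) x / deriv f x ^ 3)
  else -((deriv f x - deriv f y) / (deriv f x * deriv f y * (f x - f y)))

/-- The real scalar-curvature expression of the metric generated by `f` at the spectrum `x`, in the
normalisation `∑ k, 1 / f' (x k) ^ 2 = 1`. The coefficients `M_{kk}` and `M_{kkk}` appear as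
`deriv f (x k)` and `deriv (deriv f) (x k) / 2`. -/
noncomputable def realScalarCurvature {ι : Type*} [Fintype ι] [LinearOrder ι]
    (f : ℝ → ℝ) (x : ι → ℝ) : ℝ :=
  (∑ i, ∑ k,
      if i ≠ k then
        4 * (deriv (deriv f) (x i) / 2 * (deriv (deriv f) (x k) / 2) /
            (deriv f (x i) ^ 3 * deriv f (x k) ^ 3)) *
          (1 - 1 / deriv f (x i) ^ 2 - 1 / deriv f (x k) ^ 2)
      else 0)
    - 4 * (∑ k, deriv (deriv f) (x k) / 2 / deriv f (x k) ^ 3 * (1 - 1 / deriv f (x k) ^ 2)) *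
        (∑ i, ∑ j, if i < j then curvatureRho f (x i) (x j) else 0)
    + (∑ i, ∑ j, if i < j then curvatureRho f (x i) (x j) else 0) ^ 2
    - ∑ i, ∑ j, if i < j then curvatureRho f (x i) (x j) ^ 2 else 0

theorem half_deriv_deriv_div_deriv_pow_three (f : ℝ → ℝ) (x : ℝ) :
    deriv (deriv f) x / 2 / deriv f x ^ 3 = -curvatureRho f x x / 2 := by
  rw [curvatureRho, if_pos rfl, neg_neg, div_right_comm]

variable {ι : Type*} [Fintype ι] [LinearOrder ι]

theorem realScalarCurvature_of_curvatureRho_eq_const {f : ℝ → ℝ} {x : ι → ℝ} {r d : ℝ}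
    (hrho : ∀ i j, curvatureRho f (x i) (x j) = r) (hsum : ∑ k, 1 / deriv f (x k) ^ 2 = 1)
    (hd : d = ((Fintype.card ι : ℝ) - 1) * (Fintype.card ι + 2) / 2) :
    realScalarCurvature f x = r ^ 2 * (d * (d - 1)) := by
  have hratio (k : ι) : deriv (deriv f) (x k) / 2 / deriv f (x k) ^ 3 = -r / 2 := by
    rw [half_deriv_deriv_div_deriv_pow_three, hrho]
  have hoffDiag : (∑ i, ∑ k,
      if i ≠ k then
        4 * (deriv (deriv f) (x i) / 2 * (deriv (deriv f) (x k) / 2) /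
            (deriv f (x i) ^ 3 * deriv f (x k) ^ 3)) *
          (1 - 1 / deriv f (x i) ^ 2 - 1 / deriv f (x k) ^ 2)
      else 0) = r ^ 2 * ((Fintype.card ι - 1) * (Fintype.card ι - 2)) := by
    have hcoeff : 4 * (-r / 2 * (-r / 2)) = r ^ 2 := by ring
    simp only [mul_div_mul_comm, hratio, hcoeff, ← mul_ite_zero, ← mul_sum,
      sum_sum_ite_ne_one_sub_sub, hsum, mul_one]
  have hdiag : ∑ k, deriv (deriv f) (x k) / 2 / deriv f (x k) ^ 3 * (1 - 1 / deriv f (x k) ^ 2) =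
      -r / 2 * (Fintype.card ι - 1) := by
    simp only [hratio, ← mul_sum, sum_sub_distrib, hsum, sum_const, card_univ, nsmul_eq_mul,
      mul_one]
  rw [realScalarCurvature, hoffDiag, hdiag]
  simp only [hrho, sum_sum_ite_lt_const, nsmul_eq_mul, Nat.cast_choose_two, hd]
  ring

end ScalarCurvature

section WignerYanase

/-- The function `2√x` generating the Wigner–Yanase metric. -/
noncomputable def wignerYanase (x : ℝ) : ℝ := 2 * √x

theorem hasDerivAt_wignerYanase {x : ℝ} (hx : x ≠ 0) : HasDerivAt wignerYanase (√x)⁻¹ x := by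
  have hcoeff : 2 * (1 / (2 * √x)) = (√x)⁻¹ := by ring
  exact hcoeff ▸ (Real.hasDerivAt_sqrt hx).const_mul 2

variable {x y : ℝ}

theorem one_div_deriv_wignerYanase_sq (hx : 0 < x) : 1 / deriv wignerYanase x ^ 2 = x := by
  rw [(hasDerivAt_wignerYanase hx.ne').deriv, inv_pow, Real.sq_sqrt hx.le, one_div, inv_inv]

theorem deriv_deriv_wignerYanase (hx : 0 < x) :
    deriv (deriv wignerYanase) x = -((√x)⁻¹ ^ 3 / 2) := by
  have hderiv : deriv wignerYanase =ᶠ[nhds x] fun y ↦ (√y)⁻¹ :=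
    (eventually_ne_nhds hx.ne').mono fun _ hy ↦ (hasDerivAt_wignerYanase hy).deriv
  have hsqrt : √x ≠ 0 := (Real.sqrt_pos.2 hx).ne'
  rw [hderiv.deriv_eq, ((Real.hasDerivAt_sqrt hx.ne').fun_inv hsqrt).deriv]
  field_simp

theorem curvatureRho_wignerYanase (hx : 0 < x) (hy : 0 < y) :
    curvatureRho wignerYanase x y = 1 / 2 := by
  have hsx : √x ≠ 0 := (Real.sqrt_pos.2 hx).ne'
  have hsy : √y ≠ 0 := (Real.sqrt_pos.2 hy).ne'
  rw [curvatureRho, deriv_deriv_wignerYanase hx, (hasDerivAt_wignerYanase hx.ne').deriv,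
    (hasDerivAt_wignerYanase hy.ne').deriv, wignerYanase, wignerYanase]
  split_ifs with hxy
  · field_simp
  · have hsub : √x - √y ≠ 0 := sub_ne_zero.2 fun h ↦ hxy ((Real.sqrt_inj hx.le hy.le).1 h)
    field_simp
    ring

end WignerYanase

/-- For the Wigner–Yanase function f(x) = 2√x and λ ∈ P_n, the real
scalar-curvature expression equals d(d−1)/4 with d = (n−1)(n+2)/2. -/
theorem stmt_13 (n : ℕ) (hn : 1 ≤ n) (lam : Fin n → ℝ) (hpos : ∀ k, 0 < lam k)
    (hsum : ∑ k, lam k = 1)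
    (f : ℝ → ℝ) (hf : f = fun x => 2 * Real.sqrt x)
    (Mkk : Fin n → ℝ) (hMkk : ∀ k, Mkk k = deriv f (lam k))
    (Mkkk : Fin n → ℝ) (hMkkk : ∀ k, Mkkk k = deriv (deriv f) (lam k) / 2)
    (ρ : Fin n → Fin n → ℝ)
    (hρ : ∀ i j, ρ i j =
      if lam i = lam j then -(deriv (deriv f) (lam i) / (deriv f (lam i)) ^ 3)
      else -((deriv f (lam i) - deriv f (lam j)) /
        (deriv f (lam i) * deriv f (lam j) * (f (lam i) - f (lam j)))))
    (d : ℝ) (hd : d = ((n : ℝ) - 1) * ((n : ℝ) + 2) / 2) :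
    (∑ i : Fin n, ∑ k : Fin n,
        (if i ≠ k then
          4 * (Mkkk i * Mkkk k / (Mkk i ^ 3 * Mkk k ^ 3)) *
            (1 - 1 / Mkk i ^ 2 - 1 / Mkk k ^ 2)
        else 0))
      - 4 * (∑ k, Mkkk k / Mkk k ^ 3 * (1 - 1 / Mkk k ^ 2)) *
          (∑ i : Fin n, ∑ j : Fin n, if i < j then ρ i j else 0)
      + (∑ i : Fin n, ∑ j : Fin n, if i < j then ρ i j else 0) ^ 2
      - (∑ i : Fin n, ∑ j : Fin n, if i < j then ρ i j ^ 2 else 0)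
      = d * (d - 1) / 4 := by
  obtain rfl : f = wignerYanase := hf
  obtain rfl : Mkk = fun k ↦ deriv wignerYanase (lam k) := funext hMkk
  obtain rfl : Mkkk = fun k ↦ deriv (deriv wignerYanase) (lam k) / 2 := funext hMkkk
  obtain rfl : ρ = fun i j ↦ curvatureRho wignerYanase (lam i) (lam j) := funext₂ hρ
  have hrho (i j : Fin n) : curvatureRho wignerYanase (lam i) (lam j) = 1 / 2 :=
    curvatureRho_wignerYanase (hpos i) (hpos j)
  have hweights : ∑ k, 1 / deriv wignerYanase (lam k) ^ 2 = 1 := by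
    simpa only [one_div_deriv_wignerYanase_sq (hpos _)] using hsum
  calc realScalarCurvature wignerYanase lam
    _ = (1 / 2) ^ 2 * (d * (d - 1)) :=
      realScalarCurvature_of_curvatureRho_eq_const hrho hweights (by rw [hd, Fintype.card_fin])
    _ = d * (d - 1) / 4 := by ring
end

section
/- Let n ≥ 1 and λ = (λ_1,…,λ_n) ∈ P_n, and let f(x) = 2√x, so that M_{kk} = λ_k^{−1/2}, M_{kkk} = −λ_k^{−3/2}/4, c² = 1, and ρ_{ij} = 1/2 for all i < j (with ρ_{ij} defined as −(f'(λ_i) − f'(λ_j))/(f'(λ_i) f'(λ_j)(f(λ_i) − f(λ_j))) if λ_i ≠ λ_j and −f''(λ_i)/f'(λ_i)³ if λ_i = λ_j). Then the complex scalar-curvature expression Σ_{i≠k} 4 (M_{iii} M_{kkk}/(M_{ii}³ M_{kk}³))(1 − 1/M_{ii}² − 1/M_{kk}²) − 8 ( Σ_{k=1}^{n} (M_{kkk}/M_{kk}³)(1 − 1/M_{kk}²) )( Σ_{1≤i<j≤n} ρ_{ij} ) + 4 ( Σ_{1≤i<j≤n} ρ_{ij} )² − 2 Σ_{1≤i<j≤n}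 ρ_{ij}² equals d(d−1)/4 with d = n² − 1. (The Wigner–Yanase metric maps the complex state space onto a piece of the Euclidean sphere of radius 2 and dimension d = n² − 1, whose scalar curvature is d(d−1)/4.) -/
open Finset

/- The function `f x = 2 * √x` satisfies `1 / f' = f / 2`. Differentiating an equation
`1 / f' = α * f` gives `f'' = -α * f' ^ 3`, and taking divided differences gives `ρ = α`, so all
curvature coefficients are constant. Moreover `1 / f' (x) ^ 2 = x`, whose sum over the
eigenvalues is `1`, and the curvature expression becomes a polynomial in `n` equal to
`α ^ 2 * (d * (d - 1))` with `d = n ^ 2 - 1`: the curvature of a sphere of radius `1 / α`. -/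

section DoubleSums

variable {ι : Type*} [Fintype ι]

theorem sum_sum_ite_ne [DecidableEq ι] {A : Type*} [AddCommGroup A] (g : ι → ι → A) :
    ∑ i, ∑ k, (if i ≠ k then g i k else 0) = ∑ i, ∑ k, g i k - ∑ i, g i i := by
  rw [← sum_sub_distrib]
  refine sum_congr rfl fun i _ => ?_
  rw [← sum_filter, filter_ne, sum_erase_eq_sub (mem_univ i)]

theorem card_filter_fst_lt_snd [LinearOrder ι] :
    #{p : ι × ι | p.1 < p.2} = (Fintype.card ι).choose 2 := by
  have hswap : #{p : ι × ι | p.2 < p.1} = #{p : ι × ι | p.1 < p.2} :=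
    card_equiv (Equiv.prodComm ι ι) fun p => by simp
  have hunion : univ.offDiag
      = univ.filter (fun p : ι × ι => p.1 < p.2) ∪ univ.filter fun p => p.2 < p.1 := by
    ext p
    simp [lt_or_lt_iff_ne]
  have hcard : #{p : ι × ι | p.1 < p.2} + #{p : ι × ι | p.1 < p.2}
      = Fintype.card ι * (Fintype.card ι - 1) := by
    rw [Nat.mul_sub_one, ← card_univ, ← offDiag_card, hunion,
      card_union_of_disjoint (disjoint_filter.2 fun _ _ h => h.not_gt), hswap]
  rw [Nat.choose_two_right, ← hcard]
  lia

theorem sum_sum_ite_lt_of_eq_const [LinearOrder ι] {A : Type*} [AddCommMonoid A] {g : ι → ι → A}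
    {c : A} (hg : ∀ i j, i < j → g i j = c) :
    ∑ i, ∑ j, (if i < j then g i j else 0) = (Fintype.card ι).choose 2 • c := by
  rw [← Fintype.sum_prod_type' fun i j => if i < j then g i j else 0, ← sum_filter,
    sum_eq_card_nsmul fun p hp => hg p.1 p.2 (mem_filter.1 hp).2, card_filter_fst_lt_snd]

end DoubleSums

section InverseDerivative

theorem deriv_deriv_div_pow_three_of_inv_deriv {𝕜 : Type*} [NontriviallyNormedField 𝕜]
    {f : 𝕜 → 𝕜} {α x : 𝕜} (hf : ∀ᶠ y in nhds x, (deriv f y)⁻¹ = α * f y)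
    (hx : deriv f x ≠ 0) : deriv (deriv f) x / deriv f x ^ 3 = -α := by
  have hderiv : deriv f =ᶠ[nhds x] fun y => (α * f y)⁻¹ :=
    hf.mono fun y hy => inv_eq_iff_eq_inv.1 hy
  have hαf : α * f x ≠ 0 := hf.self_of_nhds ▸ inv_ne_zero hx
  have hfx : HasDerivAt f (deriv f x) x := (differentiableAt_of_deriv_ne_zero hx).hasDerivAt
  rw [hderiv.deriv_eq, ((hfx.const_mul α).fun_inv hαf).deriv, ← hf.self_of_nhds]
  field_simp

/-- The coefficient `ρ` of the metric with function `f`: the slope of `1 / f'` as a function of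
`f` between `x` and `y`, extended to the diagonal by the derivative of `1 / f'` with respect
to `f`. -/
noncomputable def derivInvSlope (f : ℝ → ℝ) (x y : ℝ) : ℝ :=
  if x = y then -(deriv (deriv f) x / deriv f x ^ 3)
  else -((deriv f x - deriv f y) / (deriv f x * deriv f y * (f x - f y)))

theorem derivInvSlope_eq_of_inv_deriv {f : ℝ → ℝ} {s : Set ℝ} {α : ℝ} (hs : IsOpen s)
    (hinj : s.InjOn f) (hf : ∀ x ∈ s, (deriv f x)⁻¹ = α * f x) (h0 : ∀ x ∈ s, deriv f x ≠ 0)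
    {x y : ℝ} (hx : x ∈ s) (hy : y ∈ s) : derivInvSlope f x y = α := by
  rw [derivInvSlope]
  split_ifs with hxy
  · rw [deriv_deriv_div_pow_three_of_inv_deriv ((hs.eventually_mem hx).mono hf) (h0 x hx), neg_neg]
  · have hsub : f x - f y ≠ 0 := sub_ne_zero.2 (hinj.ne hx hy hxy)
    have hinv : (deriv f x)⁻¹ - (deriv f y)⁻¹ = α * (f x - f y) := by
      rw [hf x hx, hf y hy, mul_sub]
    rw [← div_div, ← neg_div, ← neg_div, neg_sub, ← inv_sub_inv (h0 x hx) (h0 y hy), hinv,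
      mul_div_cancel_right₀ _ hsub]

end InverseDerivative

section TwoMulSqrt

theorem inv_deriv_two_mul_sqrt {x : ℝ} (hx : x ≠ 0) : (deriv (fun y => 2 * √y) x)⁻¹ = √x := by
  rw [((Real.hasDerivAt_sqrt hx).const_mul 2).deriv]
  field_simp

theorem deriv_two_mul_sqrt_ne_zero {x : ℝ} (hx : 0 < x) : deriv (fun y => 2 * √y) x ≠ 0 := by
  rw [ne_eq, ← inv_eq_zero, inv_deriv_two_mul_sqrt hx.ne']
  exact (Real.sqrt_pos.2 hx).ne'

theorem injOn_two_mul_sqrt : (Set.Ici 0).InjOn fun x : ℝ => 2 * √x := fun _ hx _ hy h =>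
  (Real.sqrt_inj hx hy).1 (mul_left_cancel₀ two_ne_zero h)

end TwoMulSqrt

section Curvature

variable {ι : Type*} [Fintype ι] [LinearOrder ι]

/-- The complex scalar-curvature expression, with `c ^ 2 = 1`, in terms of the coefficients
`M k`, `T k` and `ρ i j` that the paper writes `M_kk`, `M_kkk` and `ρ_ij`. -/
noncomputable def complexScalarCurvature (M T : ι → ℝ) (ρ : ι → ι → ℝ) : ℝ :=
  (∑ i, ∑ k,
      if i ≠ k then 4 * (T i * T k / (M i ^ 3 * M k ^ 3)) * (1 - 1 / M i ^ 2 - 1 / M k ^ 2) else 0)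
    - 8 * (∑ k, T k / M k ^ 3 * (1 - 1 / M k ^ 2)) * (∑ i, ∑ j, if i < j then ρ i j else 0)
    + 4 * (∑ i, ∑ j, if i < j then ρ i j else 0) ^ 2
    - 2 * (∑ i, ∑ j, if i < j then ρ i j ^ 2 else 0)

theorem complexScalarCurvature_of_const {M T : ι → ℝ} {ρ : ι → ι → ℝ} {α : ℝ}
    (hM : ∑ k, 1 / M k ^ 2 = 1) (hT : ∀ k, T k / M k ^ 3 = -(α / 2))
    (hρ : ∀ i j, i < j → ρ i j = α) {d : ℝ} (hd : d = (Fintype.card ι : ℝ) ^ 2 - 1) :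
    complexScalarCurvature M T ρ = α ^ 2 * (d * (d - 1)) := by
  have hsum_ρ : ∑ i, ∑ j, (if i < j then ρ i j else 0)
      = Fintype.card ι * (Fintype.card ι - 1) / 2 * α := by
    rw [sum_sum_ite_lt_of_eq_const hρ, nsmul_eq_mul, Nat.cast_choose_two]
  have hsum_ρ_sq : ∑ i, ∑ j, (if i < j then ρ i j ^ 2 else 0)
      = Fintype.card ι * (Fintype.card ι - 1) / 2 * α ^ 2 := by
    rw [sum_sum_ite_lt_of_eq_const fun i j hij => by rw [hρ i j hij], nsmul_eq_mul,
      Nat.cast_choose_two]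
  have hsum_one_sub : ∑ k, (1 - 1 / M k ^ 2) = (Fintype.card ι : ℝ) - 1 := by
    simp only [sum_sub_distrib, hM, sum_const, card_univ, nsmul_eq_mul, mul_one]
  have hsum_off_diag : ∑ i, ∑ k, (if i ≠ k then α ^ 2 * (1 - 1 / M i ^ 2 - 1 / M k ^ 2) else 0)
      = α ^ 2 * ((Fintype.card ι - 1) * (Fintype.card ι - 2)) := by
    simp only [sum_sum_ite_ne, ← mul_sum, sum_sub_distrib, hM, sum_const, card_univ,
      nsmul_eq_mul]
    ring
  have hT_mul (i k : ι) : 4 * (T i * T k / (M i ^ 3 * M k ^ 3)) = α ^ 2 := by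
    rw [mul_div_mul_comm, hT, hT]
    ring
  simp only [complexScalarCurvature, hT_mul, hT, hsum_off_diag, hsum_ρ, hsum_ρ_sq,
    ← mul_sum, hsum_one_sub, hd]
  ring

end Curvature

/-- For the Wigner–Yanase function f(x) = 2√x and λ ∈ P_n, the complex
scalar-curvature expression equals d(d−1)/4 with d = n² − 1. -/
theorem stmt_14 (n : ℕ) (hn : 1 ≤ n) (lam : Fin n → ℝ) (hpos : ∀ k, 0 < lam k)
    (hsum : ∑ k, lam k = 1)
    (f : ℝ → ℝ) (hf : f = fun x => 2 * Real.sqrt x)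
    (Mkk : Fin n → ℝ) (hMkk : ∀ k, Mkk k = deriv f (lam k))
    (Mkkk : Fin n → ℝ) (hMkkk : ∀ k, Mkkk k = deriv (deriv f) (lam k) / 2)
    (ρ : Fin n → Fin n → ℝ)
    (hρ : ∀ i j, ρ i j =
      if lam i = lam j then -(deriv (deriv f) (lam i) / (deriv f (lam i)) ^ 3)
      else -((deriv f (lam i) - deriv f (lam j)) /
        (deriv f (lam i) * deriv f (lam j) * (f (lam i) - f (lam j)))))
    (d : ℝ) (hd : d = (n : ℝ) ^ 2 - 1) :
    (∑ i : Fin n, ∑ k : Fin n,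
        (if i ≠ k then
          4 * (Mkkk i * Mkkk k / (Mkk i ^ 3 * Mkk k ^ 3)) *
            (1 - 1 / Mkk i ^ 2 - 1 / Mkk k ^ 2)
        else 0))
      - 8 * (∑ k, Mkkk k / Mkk k ^ 3 * (1 - 1 / Mkk k ^ 2)) *
          (∑ i : Fin n, ∑ j : Fin n, if i < j then ρ i j else 0)
      + 4 * (∑ i : Fin n, ∑ j : Fin n, if i < j then ρ i j else 0) ^ 2
      - 2 * (∑ i : Fin n, ∑ j : Fin n, if i < j then ρ i j ^ 2 else 0)
      = d * (d - 1) / 4 := by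
  subst hf
  obtain rfl : Mkk = fun k => deriv (fun x => 2 * √x) (lam k) := funext hMkk
  have hinv (x : ℝ) (hx : 0 < x) : (deriv (fun y => 2 * √y) x)⁻¹ = 1 / 2 * (2 * √x) := by
    rw [inv_deriv_two_mul_sqrt hx.ne']
    ring
  have hM (k) : 1 / deriv (fun x => 2 * √x) (lam k) ^ 2 = lam k := by
    rw [one_div, ← inv_pow, inv_deriv_two_mul_sqrt (hpos k).ne', Real.sq_sqrt (hpos k).le]
  have hT (k) : Mkkk k / deriv (fun x => 2 * √x) (lam k) ^ 3 = -(1 / 2 / 2) := by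
    rw [hMkkk, div_right_comm, deriv_deriv_div_pow_three_of_inv_deriv
      ((lt_mem_nhds (hpos k)).mono hinv) (deriv_two_mul_sqrt_ne_zero (hpos k)), neg_div]
  have hρ_eq (i j) : ρ i j = 1 / 2 :=
    (hρ i j).trans <| derivInvSlope_eq_of_inv_deriv isOpen_Ioi
      (injOn_two_mul_sqrt.mono Set.Ioi_subset_Ici_self) hinv
      (fun _ => deriv_two_mul_sqrt_ne_zero) (hpos i) (hpos j)
  calc
    _ = (1 / 2 : ℝ) ^ 2 * (d * (d - 1)) :=
      complexScalarCurvature_of_const (by simpa only [hM] using hsum) hT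
        (fun i j _ => hρ_eq i j) (by rw [hd, Fintype.card_fin])
    _ = d * (d - 1) / 4 := by ring
end
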